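/- Let U, V ⊆ ℝ be intervals and let σ(u,v) = (γ(u) + f(v)·ξ(u), z(v)) be a T-surface on U × V: γ, ξ : U → ℝ² differentiable with γ'(u) ≠ 0, ξ'(u) = λ(u)·γ'(u) for some λ : U → ℝ, 1 + f(v)λ(u) ≠ 0 for all (u,v), and f, z : V → ℝ differentiable. Assume additionally λ(u) ≠ 0 for all u and 1 + f(v) ≠ 0 for all v. Define σ̃(u,v) = ( (1 + f(v))·ξ(u), z(v) ). Then for all (u,v): σ̃_v(u,v) = σ_v(u,v), and σ̃_u(u,v) = ( (1+f(v))·λ(u) / (1+f(v)λ(u)) )·σ_u(u,v) with nonzero scalar factor. Hence σ̃ is parallel to σ, and the ground view of each profile curve of σ̃ lies on the line through the origin spanned by ξ(u), i.e. σ̃ is an axial T-surface parallel to σ. -/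

import Mathlib

open Real Set

/-- The vector of `ℝ³` with ground-view component `w ∈ ℝ²` and height `r`. -/
noncomputable def emb (w : EuclideanSpace ℝ (Fin 2)) (r : ℝ) : EuclideanSpace ℝ (Fin 3) :=
  !₂[w 0, w 1, r]

/-!
The curve `γ` does not enter `∂σ/∂v`, so it can be replaced without changing that derivative. Since
`γ` and `ξ` both move in the direction `γ'`, replacing `γ` by `ξ` also keeps the direction of
`∂σ/∂u`, and it turns the ground view `γ + f ξ` into `(1 + f) ξ`, which is radial.
-/

section TSurface

variable {𝕜 E F G : Type*} [NontriviallyNormedField 𝕜]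
  [NormedAddCommGroup E] [NormedSpace 𝕜 E] [NormedAddCommGroup F] [NormedSpace 𝕜 F]
  [NormedAddCommGroup G] [NormedSpace 𝕜 G]

/-- The T-surface `(u, v) ↦ (γ u + f v • ξ u, z v)`: its ground view lies in `E`, its height in `F`,
and the continuous linear map `L` assembles them to a point of the ambient space `G`. The T-surface
is axial when `γ = ξ`. -/
def tSurface (L : E × F →L[𝕜] G) (γ ξ : 𝕜 → E) (f : 𝕜 → 𝕜) (z : 𝕜 → F) (u v : 𝕜) : G :=
  L (γ u + f v • ξ u, z v)

variable (L : E × F →L[𝕜] G) {γ ξ : 𝕜 → E} {f : 𝕜 → 𝕜} {z : 𝕜 → F} {U V : Set 𝕜} {u v : 𝕜}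

theorem tSurface_self :
    tSurface L ξ ξ f z u v = L ((1 + f v) • ξ u, z v) := by
  rw [tSurface, add_smul, one_smul]

theorem hasDerivWithinAt_tSurface_left {γ' ξ' : E}
    (hγ : HasDerivWithinAt γ γ' U u) (hξ : HasDerivWithinAt ξ ξ' U u) :
    HasDerivWithinAt (fun u' => tSurface L γ ξ f z u' v) (L (γ' + f v • ξ', 0)) U u :=
  L.hasFDerivAt.comp_hasDerivWithinAt u
    ((hγ.add (hξ.const_smul (f v))).prodMk (hasDerivWithinAt_const u U (z v)))

theorem hasDerivWithinAt_tSurface_right {f' : 𝕜} {z' : F}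
    (hf : HasDerivWithinAt f f' V v) (hz : HasDerivWithinAt z z' V v) :
    HasDerivWithinAt (fun v' => tSurface L γ ξ f z u v') (L (f' • ξ u, z')) V v :=
  L.hasFDerivAt.comp_hasDerivWithinAt v (((hf.smul_const (ξ u)).const_add (γ u)).prodMk hz)

theorem smul_eq_div_smul_add_smul {K M : Type*} [DivisionRing K] [AddCommGroup M] [Module K M]
    {b : K} (hb : 1 + b ≠ 0) (a : K) (x : M) : a • x = (a / (1 + b)) • (x + b • x) :=
  calc a • x = (a / (1 + b)) • (1 + b) • x := by rw [smul_smul, div_mul_cancel₀ a hb]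
    _ = (a / (1 + b)) • (x + b • x) := by rw [add_smul, one_smul]

theorem stmt_19_general {γ' : E} {l f' : 𝕜} {z' : F}
    (hγ : HasDerivWithinAt γ γ' U u) (hξ : HasDerivWithinAt ξ (l • γ') U u)
    (hf : HasDerivWithinAt f f' V v) (hz : HasDerivWithinAt z z' V v)
    (hreg : 1 + f v * l ≠ 0) (hl : l ≠ 0) (hfv : 1 + f v ≠ 0) :
    HasDerivWithinAt (fun u' => tSurface L γ ξ f z u' v) (L (γ' + (f v * l) • γ', 0)) U u ∧
    HasDerivWithinAt (fun v' => tSurface L γ ξ f z u v') (L (f' • ξ u, z')) V v ∧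
    HasDerivWithinAt (fun u' => tSurface L ξ ξ f z u' v) (L (((1 + f v) * l) • γ', 0)) U u ∧
    HasDerivWithinAt (fun v' => tSurface L ξ ξ f z u v') (L (f' • ξ u, z')) V v ∧
    L (((1 + f v) * l) • γ', 0) =
      (((1 + f v) * l) / (1 + f v * l)) • L (γ' + (f v * l) • γ', 0) ∧
    ((1 + f v) * l) / (1 + f v * l) ≠ 0 := by
  have hσ_dir : γ' + f v • l • γ' = γ' + (f v * l) • γ' := by rw [smul_smul]
  have hσt_dir : l • γ' + f v • l • γ' = ((1 + f v) * l) • γ' := by module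
  refine ⟨hσ_dir ▸ hasDerivWithinAt_tSurface_left L hγ hξ, hasDerivWithinAt_tSurface_right L hf hz,
    hσt_dir ▸ hasDerivWithinAt_tSurface_left L hξ hξ, hasDerivWithinAt_tSurface_right L hf hz, ?_,
    div_ne_zero (mul_ne_zero hfv hl) hreg⟩
  rw [← map_smul, Prod.smul_mk, smul_zero, ← smul_eq_div_smul_add_smul hreg]

end TSurface

/-- The map `emb` as a continuous linear map from ground view and height to `ℝ³`; it serves as the
map `L` of `tSurface`. -/
noncomputable def embCLM : EuclideanSpace ℝ (Fin 2) × ℝ →L[ℝ] EuclideanSpace ℝ (Fin 3) :=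
  LinearMap.toContinuousLinearMap
    { toFun := fun p => emb p.1 p.2
      map_add' := fun p q => by ext i; fin_cases i <;> rfl
      map_smul' := fun c p => by ext i; fin_cases i <;> rfl }

/-- **Corollary to Theorem 5.9.** For a T-surface `σ(u,v) = (γ(u) + f(v)ξ(u), z(v))` with
`λ(u) ≠ 0` and `1 + f(v) ≠ 0`, the surface `σ̃(u,v) = ((1 + f(v))ξ(u), z(v))` is an axial
T-surface parallel to `σ`: `σ̃_v = σ_v` and `σ̃_u = ((1+f)λ/(1+fλ))·σ_u` with nonzero
scalar factor. -/
theorem stmt_19 (U V : Set ℝ) (hUc : U.OrdConnected) (hVc : V.OrdConnected)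
    (γ ξ γ' : ℝ → EuclideanSpace ℝ (Fin 2)) (lam : ℝ → ℝ)
    (f z f' z' : ℝ → ℝ)
    (hγ : ∀ u ∈ U, HasDerivWithinAt γ (γ' u) U u)
    (hγ'ne : ∀ u ∈ U, γ' u ≠ 0)
    (hξ : ∀ u ∈ U, HasDerivWithinAt ξ (lam u • γ' u) U u)
    (hreg : ∀ u ∈ U, ∀ v ∈ V, 1 + f v * lam u ≠ 0)
    (hf : ∀ v ∈ V, HasDerivWithinAt f (f' v) V v)
    (hz : ∀ v ∈ V, HasDerivWithinAt z (z' v) V v)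
    (hlamne : ∀ u ∈ U, lam u ≠ 0)
    (hfne : ∀ v ∈ V, 1 + f v ≠ 0)
    (σ σt : ℝ → ℝ → EuclideanSpace ℝ (Fin 3))
    (hσ : ∀ u v, σ u v = emb (γ u + f v • ξ u) (z v))
    (hσt : ∀ u v, σt u v = emb ((1 + f v) • ξ u) (z v)) :
    ∀ u ∈ U, ∀ v ∈ V,
      HasDerivWithinAt (fun u' => σ u' v)
        (emb (γ' u + (f v * lam u) • γ' u) 0) U u ∧
      HasDerivWithinAt (fun v' => σ u v') (emb (f' v • ξ u) (z' v)) V v ∧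
      HasDerivWithinAt (fun u' => σt u' v)
        (emb (((1 + f v) * lam u) • γ' u) 0) U u ∧
      -- σ̃_v = σ_v
      HasDerivWithinAt (fun v' => σt u v') (emb (f' v • ξ u) (z' v)) V v ∧
      -- σ̃_u is the stated nonzero scalar multiple of σ_u
      emb (((1 + f v) * lam u) • γ' u) 0 =
        (((1 + f v) * lam u) / (1 + f v * lam u)) • emb (γ' u + (f v * lam u) • γ' u) 0 ∧
      ((1 + f v) * lam u) / (1 + f v * lam u) ≠ 0 := by
  intro u hu v hv
  simpa only [hσ, hσt, tSurface_self] using! stmt_19_general embCLM (hγ u hu) (hξ u hu)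
    (hf v hv) (hz v hv) (hreg u hu v hv) (hlamne u hu) (hfne v hv)
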